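/- Let c ∈ ℝ² with ‖c‖ = v, let r1, v > 0, α > 2, s > 0, and set z1 = max(0, r1 − v). Then ∫_{ℝ² \ B(c, r1)} (1 + ‖y‖^α / s)^{−1} dy = ∫_{z1}^{∞} 2π r·(1 + r^α/s)^{−1} dr − ∫_{|v−r1|}^{v+r1} 2·arccos((r² + v² − r1²)/(2 r v))·r·(1 + r^α/s)^{−1} dr. -/

import Mathlib

open MeasureTheory Metric Real

/-!
Both the area and `‖y‖` are invariant under linear isometries, so the plane may be identified with
`ℂ` in such a way that the centre of the exclusion zone becomes the positive real number `v`
(`exists_isometry_complex`). In polar coordinates the point `r e^{iθ}` lies in `B(v, r1)` exactly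
when `k(r) < cos θ`, where `k(r) = (r² + v² - r1²) / (2 r v)`, and for `θ ∈ (-π, π)` this says
`|θ| < arccos (k r)`. Since Mathlib's `arccos` is constantly `π` below `-1` and `0` above `1`, the
last equivalence needs no restriction on `k` (`lt_cos_iff_abs_lt_arccos`), and it covers the circles
that lie entirely inside or entirely outside the exclusion zone.

By Fubini the integral is therefore `∫_{r > 0} (2π - 2 arccos (k r)) r (1 + r^α/s)⁻¹ dr`; this uses
that `r (1 + r^α/s)⁻¹` is integrable on `(0, ∞)`, which is where `α > 2` enters. The first factor
vanishes for `r ≤ r1 - v`, which gives the lower limit `max 0 (r1 - v)`. The integral then splits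
into two, and for `r > max 0 (r1 - v)` the angle `arccos (k r)` vanishes outside `(|v - r1|, v + r1)`.
-/

/-- The angular description of a circular arc, valid for every real `k` because `arccos` is
constant outside `[-1, 1]`. -/
lemma lt_cos_iff_abs_lt_arccos {k θ : ℝ} (hθ : θ ∈ Set.Ioo (-π) π) :
    k < cos θ ↔ |θ| < arccos k := by
  have habs : |θ| < π := abs_lt.2 hθ
  have hcos : arccos (cos θ) = |θ| := by
    rw [← cos_abs, arccos_cos (abs_nonneg _) habs.le]
  constructor
  · intro h
    by_cases hk : k < -1
    · rwa [arccos_of_le_neg_one hk.le]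
    · rw [← hcos]
      exact arccos_lt_arccos (not_lt.1 hk) h (cos_le_one _)
  · intro h
    by_contra! hk
    have := arccos_le_arccos hk
    linarith

lemma integrableOn_radial_pathloss {α s : ℝ} (hα : 2 < α) (hs : 0 < s) :
    IntegrableOn (fun r : ℝ => r * (1 + r ^ α / s)⁻¹) (Set.Ioi 0) := by
  have hmeas : Measurable (fun r : ℝ => r * (1 + r ^ α / s)⁻¹) := by fun_prop
  rw [← Set.Ioc_union_Ioi_eq_Ioi (zero_le_one (α := ℝ))]
  refine IntegrableOn.union ?_ ?_
  · refine Measure.integrableOn_of_bounded (M := 1) (by simp) hmeas.aestronglyMeasurable ?_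
    filter_upwards [ae_restrict_mem measurableSet_Ioc] with r hr
    have h0 : 0 ≤ r ^ α / s := div_nonneg (rpow_nonneg hr.1.le _) hs.le
    have h1 : (1 + r ^ α / s)⁻¹ ≤ 1 := inv_le_one_of_one_le₀ (by linarith)
    have h2 : 0 ≤ (1 + r ^ α / s)⁻¹ := by positivity
    rw [Real.norm_of_nonneg (mul_nonneg hr.1.le h2)]
    exact mul_le_one₀ hr.2 h2 h1
  · have hdom : IntegrableOn (fun r : ℝ => s * r ^ (1 - α)) (Set.Ioi 1) :=
      (integrableOn_Ioi_rpow_of_lt (by linarith) one_pos).const_mul s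
    refine Integrable.mono' hdom hmeas.aestronglyMeasurable ?_
    filter_upwards [ae_restrict_mem measurableSet_Ioi] with r hr
    have hr0 : 0 < r := one_pos.trans hr
    have hp : 0 < r ^ α := rpow_pos_of_pos hr0 _
    rw [Real.norm_of_nonneg (by positivity), rpow_sub hr0, rpow_one]
    have h1 : (1 + r ^ α / s)⁻¹ ≤ (r ^ α / s)⁻¹ :=
      inv_anti₀ (by positivity) (by linarith)
    calc r * (1 + r ^ α / s)⁻¹ ≤ r * (r ^ α / s)⁻¹ := by gcongr
      _ = s * (r / r ^ α) := by field_simp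

lemma exists_isometry_complex (c : EuclideanSpace ℝ (Fin 2)) (hc : 0 < ‖c‖) :
    ∃ L : ℂ ≃ₗᵢ[ℝ] EuclideanSpace ℝ (Fin 2), L (‖c‖ : ℂ) = c := by
  let e := Complex.orthonormalBasisOneI.repr
  have hw : ‖e.symm c‖ = ‖c‖ := e.symm.norm_map c
  have hne : (‖c‖ : ℂ) ≠ 0 := by exact_mod_cast hc.ne'
  let a : Circle := ⟨e.symm c / ‖c‖, by
    refine mem_sphere_zero_iff_norm.2 ?_
    rw [norm_div, hw, Complex.norm_real, norm_norm, div_self hc.ne']⟩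
  refine ⟨(rotation a).trans e, ?_⟩
  have : rotation a (‖c‖ : ℂ) = e.symm c := by
    rw [rotation_apply]
    exact div_mul_cancel₀ _ hne
  rw [LinearIsometryEquiv.trans_apply, this, e.apply_symm_apply]

/-- The law of cosines for the point with polar coordinates `(r, θ)` and the centre `v`. -/
lemma polar_mem_ball_iff {v r1 r θ : ℝ} (hr1 : 0 < r1) (hv : 0 < v) (hr : 0 < r) :
    Complex.polarCoord.symm (r, θ) ∈ ball (v : ℂ) r1 ↔
      (r ^ 2 + v ^ 2 - r1 ^ 2) / (2 * r * v) < cos θ := by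
  have hsq : ‖Complex.polarCoord.symm (r, θ) - (v : ℂ)‖ ^ 2
      = r ^ 2 + v ^ 2 - cos θ * (2 * r * v) := by
    rw [Complex.sq_norm, Complex.normSq_apply]
    simp only [Complex.polarCoord_symm_apply, Complex.sub_re, Complex.sub_im, Complex.mul_re,
      Complex.mul_im, Complex.add_re, Complex.add_im, Complex.ofReal_re, Complex.ofReal_im,
      Complex.I_re, Complex.I_im]
    linear_combination r ^ 2 * sin_sq_add_cos_sq θ
  rw [mem_ball, dist_eq_norm, ← sq_lt_sq₀ (norm_nonneg _) hr1.le, hsq, div_lt_iff₀ (by positivity)]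
  constructor <;> intro h <;> linarith

/-- The inner, angular integral in polar coordinates: a function equal to `x` on a full circle,
except on the arc `|θ| < a` cut out by the exclusion zone, where it is `0`. -/
lemma integral_angle (a x : ℝ) (ha0 : 0 ≤ a) (ha : a ≤ π) :
    ∫ θ in Set.Ioo (-π) π, (if |θ| < a then 0 else x) = (2 * π - 2 * a) * x := by
  have hfun : (fun θ : ℝ => if |θ| < a then 0 else x)
      = fun θ => x - (Set.Ioo (-a) a).indicator (fun _ => x) θ := by
    funext θ
    by_cases h : |θ| < a
    · have h' : θ ∈ Set.Ioo (-a) a := abs_lt.1 h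
      simp [h, h']
    · have h' : θ ∉ Set.Ioo (-a) a := fun h' => h (abs_lt.2 h')
      simp [h, h']
  rw [hfun, integral_sub (integrable_const _)
    ((integrable_const _).indicator measurableSet_Ioo), integral_indicator_const _ measurableSet_Ioo,
    setIntegral_const, measureReal_restrict_apply measurableSet_Ioo,
    Set.inter_eq_left.2 (Set.Ioo_subset_Ioo (by linarith) ha), Real.volume_real_Ioo_of_le
      (by linarith), Real.volume_real_Ioo_of_le (by linarith), smul_eq_mul, smul_eq_mul]
  ring

/-- The polar form of the integral, before it is split into two. -/
lemma integral_compl_ball_eq_radial {v r1 α s : ℝ} (hr1 : 0 < r1) (hv : 0 < v) (hα : 2 < α)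
    (hs : 0 < s) :
    ∫ z in (ball (v : ℂ) r1)ᶜ, (1 + ‖z‖ ^ α / s)⁻¹
      = ∫ r in Set.Ioi (0 : ℝ), (2 * π - 2 * arccos ((r ^ 2 + v ^ 2 - r1 ^ 2) / (2 * r * v)))
          * (r * (1 + r ^ α / s)⁻¹) := by
  let f : ℂ → ℝ := (ball (v : ℂ) r1)ᶜ.indicator fun z => (1 + ‖z‖ ^ α / s)⁻¹
  have hf : Measurable f := Measurable.indicator (by fun_prop) measurableSet_ball.compl
  have hsymm : Measurable (fun p : ℝ × ℝ => Complex.polarCoord.symm p) := by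
    simp only [Complex.polarCoord_symm_apply]
    fun_prop
  have hpolar : ∀ r ∈ Set.Ioi (0 : ℝ), ∀ θ ∈ Set.Ioo (-π) π,
      r • f (Complex.polarCoord.symm (r, θ))
        = if |θ| < arccos ((r ^ 2 + v ^ 2 - r1 ^ 2) / (2 * r * v)) then 0
          else r * (1 + r ^ α / s)⁻¹ := by
    intro r hr θ hθ
    have hiff := (polar_mem_ball_iff (θ := θ) hr1 hv hr).trans (lt_cos_iff_abs_lt_arccos hθ)
    by_cases h : |θ| < arccos ((r ^ 2 + v ^ 2 - r1 ^ 2) / (2 * r * v))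
    · have hval : f (Complex.polarCoord.symm (r, θ)) = 0 :=
        Set.indicator_of_notMem (Set.notMem_compl_iff.2 (hiff.2 h)) _
      rw [if_pos h, hval, smul_zero]
    · have hval : f (Complex.polarCoord.symm (r, θ))
          = (1 + ‖Complex.polarCoord.symm (r, θ)‖ ^ α / s)⁻¹ :=
        Set.indicator_of_mem (Set.mem_compl (mt hiff.1 h)) _
      rw [if_neg h, hval, smul_eq_mul, Complex.norm_polarCoord_symm, abs_of_pos hr]
  have hint : IntegrableOn (fun p : ℝ × ℝ => p.1 • f (Complex.polarCoord.symm p))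
      (Set.Ioi (0 : ℝ) ×ˢ Set.Ioo (-π) π) (volume.prod volume) := by
    have hdom : IntegrableOn (fun p : ℝ × ℝ => (p.1 * (1 + p.1 ^ α / s)⁻¹) * (1 : ℝ))
        (Set.Ioi (0 : ℝ) ×ˢ Set.Ioo (-π) π) (volume.prod volume) := by
      rw [IntegrableOn, ← Measure.prod_restrict]
      exact (integrableOn_radial_pathloss hα hs).mul_prod (integrable_const (1 : ℝ))
    refine Integrable.mono' hdom
      (measurable_fst.smul (hf.comp hsymm)).aestronglyMeasurable ?_
    filter_upwards [ae_restrict_mem (measurableSet_Ioi.prod measurableSet_Ioo)] with p hp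
    have hp0 : 0 < p.1 := hp.1
    have hpos : 0 ≤ p.1 * (1 + p.1 ^ α / s)⁻¹ := by positivity
    rw [hpolar p.1 hp.1 p.2 hp.2, mul_one]
    split_ifs
    · simpa using hpos
    · rw [Real.norm_of_nonneg hpos]
  rw [← integral_indicator measurableSet_ball.compl, ← Complex.integral_comp_polarCoord_symm,
    polarCoord_target, Measure.volume_eq_prod, setIntegral_prod _ hint]
  refine setIntegral_congr_fun measurableSet_Ioi fun r hr => ?_
  dsimp only
  rw [← integral_angle _ _ (arccos_nonneg _) (arccos_le_pi _)]
  exact setIntegral_congr_fun measurableSet_Ioo fun θ hθ => hpolar r hr θ hθ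

/-- The exponent integral of Lemma 3: integral of `y ↦ (1 + ‖y‖^α/s)⁻¹` over the plane with
an off-center circular exclusion zone `B(c, r1)`, with `z1 = max 0 (r1 − v)`. -/
theorem integral_pathloss_outside_offcenter_ball (c : EuclideanSpace ℝ (Fin 2))
    (v r1 α s : ℝ) (hc : ‖c‖ = v) (hr1 : 0 < r1) (hv : 0 < v) (hα : 2 < α) (hs : 0 < s) :
    ∫ y in (ball c r1)ᶜ, (1 + ‖y‖ ^ α / s)⁻¹ ∂volume
      = (∫ r in Set.Ioi (max 0 (r1 - v)), 2 * π * r * (1 + r ^ α / s)⁻¹)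
        - ∫ r in Set.Ioo (|v - r1|) (v + r1),
            2 * Real.arccos ((r ^ 2 + v ^ 2 - r1 ^ 2) / (2 * r * v)) * r
              * (1 + r ^ α / s)⁻¹ := by
  obtain ⟨L, hL⟩ := exists_isometry_complex c (hc ▸ hv)
  rw [hc] at hL
  have hplane : ∫ y in (ball c r1)ᶜ, (1 + ‖y‖ ^ α / s)⁻¹ ∂volume
      = ∫ z in (ball (v : ℂ) r1)ᶜ, (1 + ‖z‖ ^ α / s)⁻¹ := by
    rw [← L.measurePreserving.setIntegral_preimage_emb L.toHomeomorph.measurableEmbedding,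
      Set.preimage_compl, ← hL, L.preimage_ball, L.symm_apply_apply]
    simp only [L.norm_map]
  have hg := integrableOn_radial_pathloss hα hs
  have hsub : Set.Ioi (max 0 (r1 - v)) ⊆ Set.Ioi 0 := Set.Ioi_subset_Ioi (le_max_left _ _)
  have hg' := hg.mono_set hsub
  have hfirst : IntegrableOn (fun r : ℝ => 2 * π * r * (1 + r ^ α / s)⁻¹)
      (Set.Ioi (max 0 (r1 - v))) := by
    simp only [mul_assoc (2 * π)]
    exact hg'.const_mul (2 * π)
  have hsecond : IntegrableOn (fun r : ℝ =>
      2 * arccos ((r ^ 2 + v ^ 2 - r1 ^ 2) / (2 * r * v)) * r * (1 + r ^ α / s)⁻¹)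
      (Set.Ioi (max 0 (r1 - v))) := by
    have harc : Measurable fun r : ℝ => arccos ((r ^ 2 + v ^ 2 - r1 ^ 2) / (2 * r * v)) :=
      continuous_arccos.measurable.comp (by fun_prop)
    refine Integrable.mono' hfirst
      (((harc.const_mul 2).mul measurable_id).mul (by fun_prop)).aestronglyMeasurable ?_
    filter_upwards [ae_restrict_mem measurableSet_Ioi] with r hr
    have hr0 : 0 < r := hsub hr
    have h0 := arccos_nonneg ((r ^ 2 + v ^ 2 - r1 ^ 2) / (2 * r * v))
    have hle := arccos_le_pi ((r ^ 2 + v ^ 2 - r1 ^ 2) / (2 * r * v))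
    rw [Real.norm_of_nonneg (by positivity)]
    gcongr
  -- A circle of radius at most `r1 - v` lies in the closed exclusion zone.
  have hlow : ∀ r ∈ Set.Ioi (0 : ℝ) \ Set.Ioi (max 0 (r1 - v)),
      (2 * π - 2 * arccos ((r ^ 2 + v ^ 2 - r1 ^ 2) / (2 * r * v)))
        * (r * (1 + r ^ α / s)⁻¹) = 0 := by
    rintro r ⟨hr, hr'⟩
    have hr0 : 0 < r := hr
    have hle : r ≤ r1 - v := by
      rcases le_max_iff.1 (Set.notMem_Ioi.1 hr') with h | h
      · exact absurd hr0 (not_lt.2 h)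
      · exact h
    rw [arccos_of_le_neg_one, sub_self, zero_mul]
    rw [div_le_iff₀ (by positivity)]
    nlinarith
  -- The remaining circles outside the annulus miss the exclusion zone.
  have hout : ∀ r ∈ Set.Ioi (max 0 (r1 - v)) \ Set.Ioo (|v - r1|) (v + r1),
      2 * arccos ((r ^ 2 + v ^ 2 - r1 ^ 2) / (2 * r * v)) * r * (1 + r ^ α / s)⁻¹ = 0 := by
    rintro r ⟨hr, hr'⟩
    have hr0 : 0 < r := hsub hr
    have hr2 : r1 - v < r := (le_max_right _ _).trans_lt hr
    have hsq : r1 ≤ |r - v| := by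
      rcases not_and_or.1 hr' with h | h
      · rcases le_abs.1 (not_lt.1 h) with h | h
        · exact le_abs.2 (Or.inr (by linarith))
        · linarith
      · exact le_abs.2 (Or.inl (by linarith [not_lt.1 h]))
    rw [arccos_of_one_le, mul_zero, zero_mul, zero_mul]
    rw [le_div_iff₀ (by positivity)]
    have := pow_le_pow_left₀ hr1.le hsq 2
    rw [sq_abs] at this
    linarith
  have hsub' : Set.Ioo (|v - r1|) (v + r1) ⊆ Set.Ioi (max 0 (r1 - v)) := fun r hr =>
    (max_le (abs_nonneg _) (by rw [abs_sub_comm]; exact le_abs_self _)).trans_lt hr.1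
  rw [hplane, integral_compl_ball_eq_radial hr1 hv hα hs,
    setIntegral_eq_of_subset_of_forall_sdiff_eq_zero measurableSet_Ioi hsub hlow,
    ← setIntegral_eq_of_subset_of_forall_sdiff_eq_zero measurableSet_Ioi hsub' hout,
    ← integral_sub hfirst hsecond]
  refine integral_congr_ae (Filter.Eventually.of_forall fun r => ?_)
  dsimp only
  ring
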